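/- Let T be a string of length n and 1 ≤ i < j ≤ n. Let p be the starting position of the minimal suffix in Suf[i, j], and for each ℓ = 1, …, α(i, j) let p_ℓ be the starting position of the minimal suffix in Suf[j − Len(ℓ, j) + 1, j]. Let 1 ≤ k' < k ≤ α(i, j). (a) If the minimal suffix of S_j^k has length greater than Len(k', j), then the minimal suffix of T[i..j] equals T[q..j] for some q ∈ {p, p_{k'+1}, …, p_{α(i,j)}}. (b) If the minimal suffix of S_j^k has length at most Len(k', j), then the minimal suffix of T[i..j] equals T[q..j] for some q ∈ {p, p_1, …, p_{k'}, p_{k+1}, …, p_{α(i,j)}}. -/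

import Mathlib

variable {α : Type*} [LinearOrder α]

/-- `substr T i j` is the 1-indexed substring `T[i..j]` (inclusive). -/
def substr (T : List α) (i j : ℕ) : List α := (T.drop (i - 1)).take (j - i + 1)

/-- `sufFrom T i` is the 1-indexed suffix `T[i..]`. -/
def sufFrom (T : List α) (i : ℕ) : List α := T.drop (i - 1)

/-- `s` is the lexicographically minimal nonempty suffix of `w`. -/
def IsMinSuffix (w s : List α) : Prop :=
  s ≠ [] ∧ s <:+ w ∧ ∀ t, t ≠ [] → t <:+ w → ¬ List.Lex (· < ·) t s

/-- `Len ℓ j`: for `ℓ = 1` it is `1`; for `ℓ ≥ 2`, with `m = ⌊ℓ/2⌋ - 1`, it is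
`2·2^m + (j mod 2^m)` if `ℓ` is even and `3·2^m + (j mod 2^m)` if `ℓ` is odd.
The canonical substring `S_j^ℓ` is the suffix of `T[1..j]` of length `Len ℓ j`,
i.e. `substr T (j - Len ℓ j + 1) j`. -/
def Len (ℓ j : ℕ) : ℕ :=
  if ℓ = 1 then 1
  else if ℓ % 2 = 0 then 2 * 2 ^ (ℓ / 2 - 1) + j % 2 ^ (ℓ / 2 - 1)
  else 3 * 2 ^ (ℓ / 2 - 1) + j % 2 ^ (ℓ / 2 - 1)

/-!
The minimal suffix `s` of `T[a..j]` is unbordered, since a proper border would be a smaller suffix.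
If `q` starts the minimal suffix in `Suf[a, j]`, then `s` is at most `T[q..j]`, while appending
`T[j+1..]` to both does not leave the continuation of `s` strictly smaller; hence `s` is a prefix
of `T[q..j]`. It is also a suffix, and two occurrences of an unbordered string do not overlap, so
`s = T[q..j]` or `s` fits twice into `T[a..j]`.

For `a = i` this gives `s = T[p..j]` or `2|s| ≤ j - i + 1`. In the second case let `ℓ` be the least
index with `|s| ≤ Len(ℓ, j)`. As `Len(ℓ + 1, j) ≤ 2 Len(ℓ, j) + 1`, we have `ℓ ≤ α(i, j)` and
`Len(ℓ, j) < 2|s|`; now `s` does not fit twice into `S_j^ℓ`, whose minimal suffix it also is, and so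
`s = T[p_ℓ..j]`. Finally, `s` is the minimal suffix of `S_j^k` as soon as it fits into `S_j^k`, and
this restricts `ℓ` to the claimed ranges.
-/

section Unbordered

variable {β : Type*} {s u : List β}

/-- A string is unbordered if it has no nonempty proper prefix that is also a suffix. -/
def IsUnbordered (s : List β) : Prop :=
  ∀ t, t ≠ [] → t <+: s → t <:+ s → t = s

theorem IsUnbordered.eq_or_two_mul_length_le (hs : IsUnbordered s) (hpre : s <+: u)
    (hsuf : s <:+ u) : s = u ∨ 2 * s.length ≤ u.length := by
  obtain ⟨y, rfl⟩ := hsuf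
  rw [List.length_append]
  by_cases hlt : y.length < s.length
  · left
    have overlap_prefix : s.drop y.length <+: s := by simpa using hpre.drop y.length
    have overlap_ne_nil : s.drop y.length ≠ [] := by simpa using hlt
    have overlap_length := congrArg List.length
      (hs _ overlap_ne_nil overlap_prefix (List.drop_suffix _ _))
    rw [List.length_drop] at overlap_length
    have hy : y = [] := List.length_eq_zero_iff.1 (by omega)
    rw [hy, List.nil_append]
  · right
    omega

end Unbordered

theorem isPrefix_of_le_of_append_le_append {s u y z : List α} (hsu : s ≤ u)
    (happend : u ++ y ≤ s ++ z) : s <+: u := by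
  induction s generalizing u with
  | nil => exact List.nil_prefix
  | cons a s ih =>
    cases u with
    | nil => exact absurd List.Lex.nil hsu.not_gt
    | cons b u =>
      obtain hab | rfl | hba := lt_trichotomy a b
      · exact absurd (List.Lex.rel hab) happend.not_gt
      · exact List.cons_prefix_cons.2 ⟨rfl, ih (not_lt.1 fun h => hsu.not_gt (List.Lex.cons h))
          (not_lt.1 fun h => happend.not_gt (List.Lex.cons h))⟩
      · exact absurd (List.Lex.rel hba) hsu.not_gt

namespace IsMinSuffix

variable {v w s t : List α}

theorem ne_nil (hs : IsMinSuffix w s) : s ≠ [] := hs.1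

theorem isSuffix (hs : IsMinSuffix w s) : s <:+ w := hs.2.1

theorem le (hs : IsMinSuffix w s) (ht : t ≠ []) (htw : t <:+ w) : s ≤ t :=
  not_lt.1 (hs.2.2 t ht htw)

theorem isUnbordered (hs : IsMinSuffix w s) : IsUnbordered s := fun _ ht hpre hsuf =>
  le_antisymm (not_lt.1 hpre.le) (hs.le ht (hsuf.trans hs.isSuffix))

theorem unique (hs : IsMinSuffix w s) (ht : IsMinSuffix w t) : s = t :=
  le_antisymm (hs.le ht.ne_nil ht.isSuffix) (ht.le hs.ne_nil hs.isSuffix)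

theorem of_isSuffix (hs : IsMinSuffix w s) (hv : v <:+ w) (hlen : s.length ≤ v.length) :
    IsMinSuffix v s :=
  ⟨hs.1, List.suffix_of_suffix_length_le hs.isSuffix hv hlen,
    fun t ht htv => hs.2.2 t ht (htv.trans hv)⟩

theorem eq_of_isSuffix (hs : IsMinSuffix w s) (ht : IsMinSuffix v t) (hv : v <:+ w)
    (hlen : s.length ≤ v.length) : s = t :=
  (hs.of_isSuffix hv hlen).unique ht

end IsMinSuffix

section Substr

variable {β : Type*} (T : List β) {a b j L : ℕ}

theorem substr_eq_drop_take (ha : 1 ≤ a) (haj : a ≤ j) :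
    substr T a j = (T.take j).drop (a - 1) := by
  rw [substr, List.drop_take, show j - (a - 1) = j - a + 1 by omega]

theorem length_substr (ha : 1 ≤ a) (haj : a ≤ j) (hj : j ≤ T.length) :
    (substr T a j).length = j - a + 1 := by
  rw [substr, List.length_take, List.length_drop]
  omega

theorem length_substr_sub_add_one (hL : 1 ≤ L) (hLj : L ≤ j) (hj : j ≤ T.length) :
    (substr T (j - L + 1) j).length = L := by
  rw [length_substr T (by omega) (by omega) hj]
  omega

theorem substr_isSuffix_substr (ha : 1 ≤ a) (hab : a ≤ b) (hbj : b ≤ j) :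
    substr T b j <:+ substr T a j := by
  rw [substr_eq_drop_take T ha (hab.trans hbj), substr_eq_drop_take T (ha.trans hab) hbj]
  exact List.drop_suffix_drop_left _ (by omega)

theorem substr_sub_add_one_isSuffix_substr (ha : 1 ≤ a) (hL : 1 ≤ L) (hLa : L < j - a + 1) :
    substr T (j - L + 1) j <:+ substr T a j :=
  substr_isSuffix_substr T ha (by omega) (by omega)

theorem exists_eq_substr_of_isSuffix {s : List β} (ha : 1 ≤ a) (haj : a ≤ j) (hs : s ≠ [])
    (hsuf : s <:+ substr T a j) : ∃ r, a ≤ r ∧ r ≤ j ∧ s = substr T r j := by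
  have hpos := List.length_pos_iff.2 hs
  have hlen : (substr T a j).length ≤ j - a + 1 := List.length_take_le _ _
  have hr : a + ((substr T a j).length - s.length) ≤ j := by omega
  refine ⟨_, Nat.le_add_right _ _, hr, ?_⟩
  rw [substr_eq_drop_take T (by omega) hr, Nat.sub_add_comm ha, ← List.drop_drop,
    ← substr_eq_drop_take T ha haj]
  exact List.suffix_iff_eq_drop.1 hsuf

theorem sufFrom_eq_substr_append (ha : 1 ≤ a) (haj : a ≤ j) :
    sufFrom T a = substr T a j ++ T.drop j := by
  rw [sufFrom, substr, show j = a - 1 + (j - a + 1) by omega, ← List.drop_drop,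
    show a - 1 + (j - a + 1) - a + 1 = j - a + 1 by omega, List.take_append_drop]

end Substr

/-- `q` is the starting position of the minimal suffix in `Suf[a, j]`. Only suffixes of the whole
string `T` starting in `[a, j]` are compared, so `T[q..j]` need not be the minimal suffix of
`T[a..j]`. -/
def IsMinSuffixStart (T : List α) (a j q : ℕ) : Prop :=
  a ≤ q ∧ q ≤ j ∧ ∀ r, a ≤ r → r ≤ j → ¬ List.Lex (· < ·) (sufFrom T r) (sufFrom T q)

theorem IsMinSuffix.eq_substr_or_two_mul_length_le {T s : List α} {a j q : ℕ}
    (hs : IsMinSuffix (substr T a j) s) (hq : IsMinSuffixStart T a j q) (ha : 1 ≤ a)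
    (hj : j ≤ T.length) : s = substr T q j ∨ 2 * s.length ≤ j - a + 1 := by
  obtain ⟨haq, hqj, hmin⟩ := hq
  obtain ⟨r, har, hrj, hsr⟩ :=
    exists_eq_substr_of_isSuffix T ha (haq.trans hqj) hs.ne_nil hs.isSuffix
  have hlen := length_substr T (ha.trans haq) hqj hj
  have hsuf : substr T q j <:+ substr T a j := substr_isSuffix_substr T ha haq hqj
  have hne : substr T q j ≠ [] := List.ne_nil_of_length_pos (by omega)
  have happend : substr T q j ++ T.drop j ≤ s ++ T.drop j := by
    rw [hsr, ← sufFrom_eq_substr_append T (ha.trans haq) hqj,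
      ← sufFrom_eq_substr_append T (ha.trans har) hrj]
    exact not_lt.1 (hmin r har hrj)
  have hpre : s <+: substr T q j := isPrefix_of_le_of_append_le_append (hs.le hne hsuf) happend
  refine (hs.isUnbordered.eq_or_two_mul_length_le hpre
    (List.suffix_of_suffix_length_le hs.isSuffix hsuf hpre.length_le)).imp_right fun h => ?_
  omega

/-- A nondecreasing sequence of lengths `1 = f 1 ≤ f 2 ≤ ⋯` that at most doubles, up to an additive
`1`, at each step; it abstracts `ℓ ↦ Len ℓ j`. Indices start at `1` and `f 0` is irrelevant. -/
structure IsLengthScale (f : ℕ → ℕ) : Prop where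
  one : f 1 = 1
  le_succ : ∀ ℓ, 1 ≤ ℓ → f ℓ ≤ f (ℓ + 1)
  succ_le_two_mul_add_one : ∀ ℓ, 1 ≤ ℓ → f (ℓ + 1) ≤ 2 * f ℓ + 1

namespace IsLengthScale

variable {f : ℕ → ℕ} {l m A x : ℕ}

theorem mono (hf : IsLengthScale f) (hl : 1 ≤ l) (hlm : l ≤ m) : f l ≤ f m :=
  monotoneOn_nat_Ici_of_le_succ hf.le_succ hl (hl.trans hlm) hlm

theorem one_le (hf : IsLengthScale f) (hl : 1 ≤ l) : 1 ≤ f l :=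
  hf.one.symm.trans_le (hf.mono le_rfl hl)

theorem lt_two_mul_of_isLeast (hf : IsLengthScale f) (hx : 1 ≤ x)
    (hl : IsLeast {ℓ | 1 ≤ ℓ ∧ x ≤ f ℓ} l) : f l < 2 * x := by
  obtain rfl | ⟨m, hm, rfl⟩ : l = 1 ∨ ∃ m, 1 ≤ m ∧ l = m + 1 := by
    have : 1 ≤ l := hl.1.1
    exact or_iff_not_imp_left.2 fun h => ⟨l - 1, by omega, by omega⟩
  · have := hf.one
    omega
  · have hmx : f m < x := by
      by_contra! hxm
      exact absurd (hl.2 ⟨hm, hxm⟩) (by omega)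
    have := hf.succ_le_two_mul_add_one m hm
    omega

theorem exists_isLeast (hf : IsLengthScale f) (hA : 1 ≤ A) (hx : 2 * x ≤ f (A + 1)) :
    ∃ l ≤ A, IsLeast {ℓ | 1 ≤ ℓ ∧ x ≤ f ℓ} l := by
  classical
  have hxA : x ≤ f A := by
    have := hf.succ_le_two_mul_add_one A hA
    omega
  have hleast := Nat.isLeast_find (p := fun ℓ => 1 ≤ ℓ ∧ x ≤ f ℓ) ⟨A, hA, hxA⟩
  exact ⟨_, hleast.2 ⟨hA, hxA⟩, hleast⟩

end IsLengthScale

theorem len_two_mul_succ (m j : ℕ) : Len (2 * (m + 1)) j = 2 * 2 ^ m + j % 2 ^ m := by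
  rw [Len, if_neg (by omega), if_pos (by omega), show 2 * (m + 1) / 2 - 1 = m by omega]

theorem len_two_mul_succ_add_one (m j : ℕ) :
    Len (2 * (m + 1) + 1) j = 3 * 2 ^ m + j % 2 ^ m := by
  rw [Len, if_neg (by omega), if_neg (by omega), show (2 * (m + 1) + 1) / 2 - 1 = m by omega]

theorem len_le_succ_and_succ_le_two_mul_add_one (j : ℕ) {l : ℕ} (hl : 1 ≤ l) :
    Len l j ≤ Len (l + 1) j ∧ Len (l + 1) j ≤ 2 * Len l j + 1 := by
  obtain rfl | ⟨m, rfl⟩ | ⟨m, rfl⟩ :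
      l = 1 ∨ (∃ m, l = 2 * (m + 1)) ∨ ∃ m, l = 2 * (m + 1) + 1 := by
    obtain ⟨c, rfl | rfl⟩ := Nat.even_or_odd' l
    · exact .inr (.inl ⟨c - 1, by omega⟩)
    · exact (Nat.eq_zero_or_pos c).imp (by omega) fun _ => .inr ⟨c - 1, by omega⟩
  · simp [Len, Nat.mod_one]
  · rw [len_two_mul_succ, len_two_mul_succ_add_one]
    omega
  · rw [show 2 * (m + 1) + 1 + 1 = 2 * (m + 1 + 1) by ring, len_two_mul_succ,
      len_two_mul_succ_add_one, pow_succ]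
    have : j % 2 ^ m < 2 ^ m := Nat.mod_lt _ (by positivity)
    have : j % (2 ^ m * 2) < 2 ^ m * 2 := Nat.mod_lt _ (by positivity)
    omega

theorem isLengthScale_len (j : ℕ) : IsLengthScale fun ℓ => Len ℓ j where
  one := rfl
  le_succ _ hl := (len_le_succ_and_succ_le_two_mul_add_one j hl).1
  succ_le_two_mul_add_one _ hl := (len_le_succ_and_succ_le_two_mul_add_one j hl).2

theorem IsMinSuffix.eq_substr_or_exists_isLeast {T s : List α} {i j p A : ℕ} {ps f : ℕ → ℕ}
    (hs : IsMinSuffix (substr T i j) s) (hf : IsLengthScale f) (hi : 1 ≤ i) (hj : j ≤ T.length)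
    (hp : IsMinSuffixStart T i j p) (hA : IsGreatest {ℓ | 1 ≤ ℓ ∧ f ℓ < j - i + 1} A)
    (hps : ∀ ℓ, 1 ≤ ℓ → ℓ ≤ A → IsMinSuffixStart T (j - f ℓ + 1) j (ps ℓ)) :
    s = substr T p j ∨
      ∃ l ≤ A, IsLeast {ℓ | 1 ≤ ℓ ∧ s.length ≤ f ℓ} l ∧ s = substr T (ps l) j := by
  refine (hs.eq_substr_or_two_mul_length_le hp hi hj).imp_right fun htwice => ?_
  have hA_succ : j - i + 1 ≤ f (A + 1) := by
    by_contra! hlt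
    exact absurd (hA.2 ⟨by omega, hlt⟩) (by omega)
  obtain ⟨l, hlA, hl⟩ := hf.exists_isLeast hA.1.1 (htwice.trans hA_succ)
  refine ⟨l, hlA, hl, ?_⟩
  obtain ⟨hl1, hsl⟩ := hl.1
  have hfl : f l < j - i + 1 := (hf.mono hl1 hlA).trans_lt hA.1.2
  have hfl1 := hf.one_le hl1
  have hlen := length_substr_sub_add_one T hfl1 (by omega) hj
  have hs_window := hs.of_isSuffix (substr_sub_add_one_isSuffix_substr T hi hfl1 hfl)
    (hsl.trans_eq hlen.symm)
  refine (hs_window.eq_substr_or_two_mul_length_le (hps l hl1 hlA) (by omega) hj).resolve_right ?_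
  have := hf.lt_two_mul_of_isLeast (List.length_pos_iff.2 hs.ne_nil) hl
  omega

theorem stmt_13_general {T sk : List α} {i j p A k k' : ℕ} {ps f : ℕ → ℕ}
    (hf : IsLengthScale f) (hi : 1 ≤ i) (hj : j ≤ T.length)
    (hp : IsMinSuffixStart T i j p) (hA : IsGreatest {ℓ | 1 ≤ ℓ ∧ f ℓ < j - i + 1} A)
    (hps : ∀ ℓ, 1 ≤ ℓ → ℓ ≤ A → IsMinSuffixStart T (j - f ℓ + 1) j (ps ℓ))
    (hk' : 1 ≤ k') (hk : 1 ≤ k) (hkA : k ≤ A)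
    (hsk : IsMinSuffix (substr T (j - f k + 1) j) sk) :
    (f k' < sk.length →
      ∀ s, IsMinSuffix (substr T i j) s →
        ∃ q, (q = p ∨ ∃ ℓ, k' + 1 ≤ ℓ ∧ ℓ ≤ A ∧ q = ps ℓ) ∧ s = substr T q j) ∧
    (sk.length ≤ f k' →
      ∀ s, IsMinSuffix (substr T i j) s →
        ∃ q, (q = p ∨ (∃ ℓ, 1 ≤ ℓ ∧ ℓ ≤ k' ∧ q = ps ℓ) ∨
          ∃ ℓ, k + 1 ≤ ℓ ∧ ℓ ≤ A ∧ q = ps ℓ) ∧ s = substr T q j) := by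
  have hfk : f k < j - i + 1 := (hf.mono hk hkA).trans_lt hA.1.2
  have hwindow := substr_sub_add_one_isSuffix_substr T hi (hf.one_le hk) hfk
  have hlen := length_substr_sub_add_one T (hf.one_le hk) (by omega) hj
  constructor <;> intro hsk_length s hs <;>
    obtain h | ⟨l, hlA, hl, h⟩ := hs.eq_substr_or_exists_isLeast hf hi hj hp hA hps
  · exact ⟨p, .inl rfl, h⟩
  · refine ⟨ps l, .inr ⟨l, ?_, hlA, rfl⟩, h⟩
    by_contra! hlk'
    have hlt : s.length < sk.length :=
      (hl.1.2.trans (hf.mono hl.1.1 (by omega))).trans_lt hsk_length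
    exact hlt.ne (congrArg List.length
      (hs.eq_of_isSuffix hsk hwindow (hlt.le.trans hsk.isSuffix.length_le)))
  · exact ⟨p, .inl rfl, h⟩
  · refine ⟨ps l, .inr ?_, h⟩
    by_cases hsk_fits : s.length ≤ f k
    · obtain rfl := hs.eq_of_isSuffix hsk hwindow (hsk_fits.trans_eq hlen.symm)
      exact .inl ⟨l, hl.1.1, hl.2 ⟨hk', hsk_length⟩, rfl⟩
    · refine .inr ⟨l, ?_, hlA, rfl⟩
      by_contra! hlk
      exact hsk_fits (hl.1.2.trans (hf.mono hl.1.1 (by omega)))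

/-- Let `T` be a string of length `n`, `1 ≤ i < j ≤ n`, `p` the starting position of the minimal
suffix in `Suf[i,j]`, `A = α(i,j)` the largest `ℓ ≥ 1` with `Len(ℓ,j) < j - i + 1`, and for
`1 ≤ ℓ ≤ A` let `ps ℓ` be the starting position of the minimal suffix in
`Suf[j - Len(ℓ,j) + 1, j]`.  Let `1 ≤ k' < k ≤ A` and let `sk` be the minimal suffix of the
canonical substring `S_j^k`.
(a) If `|sk| > Len(k', j)`, the minimal suffix of `T[i..j]` equals `T[q..j]` for some
`q ∈ {p, ps (k'+1), …, ps A}`.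
(b) If `|sk| ≤ Len(k', j)`, the minimal suffix of `T[i..j]` equals `T[q..j]` for some
`q ∈ {p, ps 1, …, ps k', ps (k+1), …, ps A}`. -/
theorem stmt_13 (T : List α) (i j p A k k' : ℕ) (ps : ℕ → ℕ) (sk : List α)
    (hi : 1 ≤ i) (hij : i < j) (hj : j ≤ T.length)
    (hp1 : i ≤ p) (hp2 : p ≤ j)
    (hpmin : ∀ q, i ≤ q → q ≤ j → ¬ List.Lex (· < ·) (sufFrom T q) (sufFrom T p))
    (hA1 : 1 ≤ A) (hA2 : Len A j < j - i + 1)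
    (hA3 : ∀ ℓ, 1 ≤ ℓ → Len ℓ j < j - i + 1 → ℓ ≤ A)
    (hps : ∀ ℓ, 1 ≤ ℓ → ℓ ≤ A →
      j - Len ℓ j + 1 ≤ ps ℓ ∧ ps ℓ ≤ j ∧
        ∀ q, j - Len ℓ j + 1 ≤ q → q ≤ j →
          ¬ List.Lex (· < ·) (sufFrom T q) (sufFrom T (ps ℓ)))
    (hk' : 1 ≤ k') (hk'k : k' < k) (hkA : k ≤ A)
    (hsk : IsMinSuffix (substr T (j - Len k j + 1) j) sk) :
    (Len k' j < sk.length →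
      ∀ s, IsMinSuffix (substr T i j) s →
        ∃ q, (q = p ∨ ∃ ℓ, k' + 1 ≤ ℓ ∧ ℓ ≤ A ∧ q = ps ℓ) ∧ s = substr T q j) ∧
    (sk.length ≤ Len k' j →
      ∀ s, IsMinSuffix (substr T i j) s →
        ∃ q, (q = p ∨ (∃ ℓ, 1 ≤ ℓ ∧ ℓ ≤ k' ∧ q = ps ℓ) ∨
          ∃ ℓ, k + 1 ≤ ℓ ∧ ℓ ≤ A ∧ q = ps ℓ) ∧ s = substr T q j) :=
  stmt_13_general (isLengthScale_len j) hi hj ⟨hp1, hp2, hpmin⟩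
    ⟨⟨hA1, hA2⟩, fun ℓ hℓ => hA3 ℓ hℓ.1 hℓ.2⟩ hps hk' (hk'.trans hk'k.le) hkA hsk
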